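/- There exists a constant C > 0, depending only on d, such that for every ε ∈ (0,1), every n ≥ 1 and every symmetric ψ ∈ ΓL²_n with ‖(−L₀)^{1/2}ψ‖ < ∞, the bound ‖(−L₀)^{−1/2} A⁺_ε ψ‖ ≤ C √n ‖(−L₀)^{1/2} ψ‖ holds (this is the '+' case of the graded sector bound ‖(−L₀)^{−1/2} A^ε_σ ψ‖ ≤ C ‖√N (−L₀)^{1/2} ψ‖, since the number operator N acts on ΓL²_n as multiplication by n). -/

import Mathlib

open scoped BigOperators
open scoped Classical

noncomputable section

namespace SBE

/-- Lattice points of `ℤ^d`. -/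
abbrev ZLat (d : ℕ) := Fin d → ℤ

/-- Kernels of the `n`-th chaos: functions on `n`-tuples of lattice points. -/
abbrev Chaos (d n : ℕ) := (Fin n → ZLat d) → ℂ

/-- Squared Euclidean norm of a lattice point. -/
def nsq {d : ℕ} (k : ZLat d) : ℝ := ∑ i, ((k i : ℝ))^2

/-- Euclidean norm of a lattice point. -/
def eN {d : ℕ} (k : ZLat d) : ℝ := Real.sqrt (nsq k)

/-- Supremum norm of a lattice point. -/
def sN {d : ℕ} (k : ZLat d) : ℝ := ((Finset.univ.sup fun i => (k i).natAbs : ℕ) : ℝ)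

/-- The norm used in the Fourier cutoff: Euclidean if `d = 2`, supremum otherwise. -/
def cutNorm (d : ℕ) (k : ZLat d) : ℝ := if d = 2 then eN k else sN k

/-- `w · k`. -/
def dotw {d : ℕ} (w : Fin d → ℝ) (k : ZLat d) : ℝ := ∑ i, w i * (k i : ℝ)

/-- `|k_{1:n}|² = Σ_i |k_i|²`. -/
def wSq {d n : ℕ} (k : Fin n → ZLat d) : ℝ := ∑ a, nsq (k a)

/-- The coupling constant `λ_ε`. -/
def lam (d : ℕ) (ε : ℝ) : ℝ :=
  if d = 2 then (Real.sqrt (Real.log (1 / ε^2)))⁻¹ else ε ^ ((d:ℝ)/2 - 1)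

/-- The Fourier cutoff indicator `J^ε_{ℓ,m}`. -/
def Jind (d : ℕ) (ε : ℝ) (l m : ZLat d) : ℝ :=
  if 0 < ε * cutNorm d l ∧ ε * cutNorm d l ≤ 1 ∧
     0 < ε * cutNorm d m ∧ ε * cutNorm d m ≤ 1 ∧
     0 < ε * cutNorm d (l + m) ∧ ε * cutNorm d (l + m) ≤ 1 then 1 else 0

/-- Symmetry of a kernel under permutation of its arguments. -/
def Symm {d n : ℕ} (f : Chaos d n) : Prop :=
  ∀ (σ : Equiv.Perm (Fin n)) (k : Fin n → ZLat d), f (k ∘ σ) = f k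

/-- A kernel vanishes whenever one of its arguments is the zero frequency
(i.e. it is really a function on `(ℤ^d_0)^n`). -/
def SuppOk {d n : ℕ} (f : Chaos d n) : Prop :=
  ∀ k : Fin n → ZLat d, (∃ a, k a = 0) → f k = 0

/-- Summand of `‖(-L₀)^s f‖²`. -/
def sobTerm {d n : ℕ} (s : ℝ) (f : Chaos d n) (k : Fin n → ZLat d) : ℝ :=
  (wSq k / 2) ^ (2*s) * ‖f k‖^2

/-- `‖(-L₀)^s f‖² = n! Σ_k (|k_{1:n}|²/2)^{2s} |f(k)|²`. -/
def sobSq {d n : ℕ} (s : ℝ) (f : Chaos d n) : ℝ := (n.factorial : ℝ) * ∑' k, sobTerm s f k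

/-- Remove the entries `i < j` from an `(n+2)`-tuple (order preservingly). -/
def remove2 {X : Type*} {n : ℕ} (k : Fin (n+2) → X) (i j : Fin (n+2)) (h : i < j) :
    Fin n → X :=
  fun a => k (j.succAbove ((Fin.castLT i
    (Nat.lt_of_lt_of_le (Fin.lt_def.mp h) (Nat.lt_succ_iff.mp j.isLt))).succAbove a))

/-- The operator `A⁺_ε : ΓL²_{n+1} → ΓL²_{n+2}`. -/
def Aplus (d : ℕ) (w : Fin d → ℝ) (ε : ℝ) {n : ℕ} (f : Chaos d (n+1)) : Chaos d (n+2) :=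
  fun k => -(2 * Complex.I / (((2*Real.pi) ^ ((d:ℝ)/2) : ℝ) : ℂ)) *
      ((lam d ε / ((n:ℝ)+2) : ℝ) : ℂ) *
    ∑ i : Fin (n+2), ∑ j : Fin (n+2),
      if h : i < j then
        ((dotw w (k i + k j) : ℝ) : ℂ) * ((Jind d ε (k i) (k j) : ℝ) : ℂ) *
          f (Fin.cons (k i + k j) (remove2 k i j h))
      else 0

/-- The operator `A⁻_ε : ΓL²_{n+2} → ΓL²_{n+1}`. -/
def Aminus (d : ℕ) (w : Fin d → ℝ) (ε : ℝ) {n : ℕ} (f : Chaos d (n+2)) : Chaos d (n+1) :=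
  fun k => (2 * Complex.I / (((2*Real.pi) ^ ((d:ℝ)/2) : ℝ) : ℂ)) *
      ((((n:ℝ)+2) * lam d ε : ℝ) : ℂ) *
    ∑ j : Fin (n+1), ((dotw w (k j) : ℝ) : ℂ) *
      ∑' l : ZLat d, ((Jind d ε l (k j - l) : ℝ) : ℂ) *
        f (Fin.cons l (Fin.cons (k j - l) (fun a => k (j.succAbove a))))

lemma nsq_nonneg {d : ℕ} (k : ZLat d) : 0 ≤ nsq k := Finset.sum_nonneg fun _ _ => sq_nonneg _

lemma nsq_zero {d : ℕ} : nsq (0 : ZLat d) = 0 := by simp [nsq]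

lemma coord_sq_le_nsq {d : ℕ} (k : ZLat d) (i : Fin d) : ((k i : ℝ))^2 ≤ nsq k :=
  Finset.single_le_sum (f := fun i => ((k i : ℝ))^2) (fun _ _ => sq_nonneg _) (Finset.mem_univ i)

lemma lat_sum (d : ℕ) (hd : 1 ≤ d) (n : ℕ) :
    ∑ p ∈ Fintype.piFinset (fun _ : Fin d => Finset.Icc (-n : ℤ) n), (nsq p)⁻¹ ≤
      2 * d * 3 ^ (d - 1) * ∑ k ∈ Finset.range n, ((k : ℝ) + 1) ^ (d - 1) * (((k : ℝ) + 1) ^ 2)⁻¹ := by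
  let s (n : ℕ) := Fintype.piFinset fun i : Fin d ↦ Finset.Icc (-n : ℤ) n
  have hs0 : s 0 = {0} := by ext; simp [s, funext_iff]
  have hs {a b : ℕ} (ha : a ≤ b) : s a ⊆ s b := by
    intro x hx
    simp only [s, Fintype.mem_piFinset, Finset.mem_Icc] at hx ⊢
    intro i
    have := hx i
    omega
  have this (k : ℕ) : (s (k + 1) \ s k).card ≤ 2 * d * (2 * k + 3) ^ (d - 1) := by
    rw [Finset.card_sdiff_of_subset (hs (by omega))]
    simp only [s, Fintype.card_piFinset,
      Int.card_Icc, Finset.prod_const]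
    have e1 : (((k+1 : ℕ) : ℤ) + 1 - -((k+1 : ℕ) : ℤ)).toNat = 2 * k + 3 := by omega
    have e2 : ((k : ℤ) + 1 - -(k : ℤ)).toNat = 2 * k + 1 := by omega
    rw [e1, e2]
    simp only [Finset.card_univ, Fintype.card_fin]
    have h := abs_pow_sub_pow_le (α := ℤ) (2 * k + 3) (2 * k + 1) d
    have h3 : max |(2 * k + 3 : ℤ)| |(2 * k + 1 : ℤ)| = 2 * k + 3 := by
      rw [abs_of_nonneg (by positivity), abs_of_nonneg (by positivity)]; apply max_eq_left; omega
    rw [h3] at h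
    have h4 : |(2 * k + 3 : ℤ) - (2 * k + 1)| = 2 := by ring_nf; norm_num
    rw [h4] at h
    have h5 := (le_abs_self _).trans h
    zify
    rw [Nat.cast_sub (Nat.pow_le_pow_left (by omega) _)]
    push_cast
    linarith
  calc ∑ p ∈ s n, (nsq p)⁻¹
      = ∑ k ∈ Finset.range n, ∑ p ∈ (s (k + 1) \ s k), (nsq p)⁻¹ := by
        rw [Finset.sum_eq_sum_range_sdiff _ @hs, hs0]; simp [nsq_zero]
    _ ≤ ∑ k ∈ Finset.range n, ∑ p ∈ (s (k + 1) \ s k), (((k : ℝ) + 1) ^ 2)⁻¹ := by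
        refine Finset.sum_le_sum fun k hk => Finset.sum_le_sum fun v hv => ?_
        obtain ⟨j, hj⟩ : ∃ i, v i ∉ Finset.Icc (-k : ℤ) k := by
          simpa [s] using (Finset.mem_sdiff.mp hv).2
        have h1 : (k : ℤ) + 1 ≤ |v j| := by
          by_contra! H
          rw [Int.lt_add_one_iff, abs_le, ← Finset.mem_Icc] at H
          exact hj H
        have h2 : (k : ℝ) + 1 ≤ |(v j : ℝ)| := by exact_mod_cast h1
        apply inv_anti₀ (by positivity)
        calc ((k : ℝ) + 1)^2 ≤ |(v j : ℝ)|^2 := by gcongr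
          _ = (v j : ℝ)^2 := sq_abs _
          _ ≤ nsq v := coord_sq_le_nsq v j
    _ ≤ ∑ k ∈ Finset.range n, (2 * d * (3 * ((k : ℝ) + 1)) ^ (d - 1)) * (((k : ℝ) + 1) ^ 2)⁻¹ := by
        simp only [Finset.sum_const, nsmul_eq_mul]
        refine Finset.sum_le_sum fun k hk => ?_
        gcongr
        have h := this k
        have h' : ((s (k + 1) \ s k).card : ℝ) ≤ 2 * d * (2 * k + 3) ^ (d - 1) := by exact_mod_cast h
        refine h'.trans ?_
        gcongr
        linarith [(Nat.cast_nonneg k : (0:ℝ) ≤ k)]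
    _ = _ := by
        rw [Finset.mul_sum]
        refine Finset.sum_congr rfl fun k _ => ?_
        rw [mul_pow]; ring

lemma cut_pos_ne {d : ℕ} {ε : ℝ} (l : ZLat d) (h : 0 < ε * cutNorm d l) : l ≠ 0 := by
  rintro rfl
  revert h
  unfold cutNorm eN sN
  split_ifs
  · simp [nsq_zero]
  · have h0 : (Finset.univ.sup fun i : Fin d => ((0 : ZLat d) i).natAbs) = 0 := by
      refine Nat.le_zero.mp (Finset.sup_le fun i _ => ?_)
      simp
    rw [h0]; simp

lemma one_le_nsq {d : ℕ} (l : ZLat d) (h : l ≠ 0) : 1 ≤ nsq l := by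
  obtain ⟨i, hi⟩ := Function.ne_iff.mp h
  refine le_trans ?_ (coord_sq_le_nsq l i)
  have h1 : (1 : ℤ) ≤ |l i| := Int.one_le_abs (by simpa using hi)
  have h2 : (1 : ℝ) ≤ |(l i : ℝ)| := by exact_mod_cast h1
  rw [← sq_abs]; nlinarith

lemma coord_le_cut {d : ℕ} (l : ZLat d) (i : Fin d) : |(l i : ℝ)| ≤ cutNorm d l := by
  unfold cutNorm eN sN
  split_ifs
  · rw [← Real.sqrt_sq_eq_abs]
    exact Real.sqrt_le_sqrt (coord_sq_le_nsq l i)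
  · have h := Finset.le_sup (f := fun i => (l i).natAbs) (Finset.mem_univ i)
    have h2 : (((l i).natAbs : ℕ) : ℝ) = |(l i : ℝ)| := by
      rw [Nat.cast_natAbs]; push_cast; rfl
    rw [← h2]
    exact_mod_cast h

lemma Jind_nonneg (d : ℕ) (ε : ℝ) (l m : ZLat d) : 0 ≤ Jind d ε l m := by
  unfold Jind; split_ifs <;> norm_num

lemma Jind_le_one (d : ℕ) (ε : ℝ) (l m : ZLat d) : Jind d ε l m ≤ 1 := by
  unfold Jind; split_ifs <;> norm_num

lemma Jind_ne {d : ℕ} {ε : ℝ} {l m : ZLat d} (h : Jind d ε l m ≠ 0) : 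
     0 < ε * cutNorm d l ∧ ε * cutNorm d l ≤ 1 ∧
     0 < ε * cutNorm d m ∧ ε * cutNorm d m ≤ 1 ∧
     0 < ε * cutNorm d (l + m) ∧ ε * cutNorm d (l + m) ≤ 1 := by
  unfold Jind at h
  by_contra h'
  rw [if_neg h'] at h
  exact h rfl

lemma Jind_small {ε : ℝ} (hε : 0 < ε) {l m : ZLat 2} (h : Jind 2 ε l m ≠ 0) : 2 * ε ^ 2 ≤ 1 := by
  by_contra! hc
  have key : ∀ q : ZLat 2, 0 < ε * cutNorm 2 q → ε * cutNorm 2 q ≤ 1 → 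
      (q 0)^2 + (q 1)^2 = 1 := by
    intro q h1 h2
    have a1 := one_le_nsq q (cut_pos_ne q h1)
    simp only [cutNorm, if_true, eN] at h2
    have a2 : ε ^ 2 * nsq q ≤ 1 := by
      have h3 := Real.sq_sqrt (nsq_nonneg q)
      have h4 := Real.sqrt_nonneg (nsq q)
      have : (ε * Real.sqrt (nsq q))^2 ≤ 1 := by
        have : 0 ≤ ε * Real.sqrt (nsq q) := by positivity
        nlinarith
      rwa [mul_pow, h3] at this
    have a3 : nsq q < 2 := by
      by_contra! h5
      nlinarith [sq_nonneg ε]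
    have e : nsq q = (((q 0)^2 + (q 1)^2 : ℤ) : ℝ) := by simp [nsq, Fin.sum_univ_two]
    rw [e] at a1 a3
    have b1 : 1 ≤ (q 0)^2 + (q 1)^2 := by exact_mod_cast a1
    have b2 : (q 0)^2 + (q 1)^2 < 2 := by exact_mod_cast a3
    omega
  obtain ⟨h1, h2, h3, h4, h5, h6⟩ := Jind_ne h
  have k1 := key l h1 h2
  have k2 := key m h3 h4
  have k3 := key _ h5 h6
  simp only [Pi.add_apply] at k3
  have : 2 * (l 0 * m 0 + l 1 * m 1) = -1 := by linear_combination k3 - k1 - k2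
  omega

/-- the key one-particle bound -/
lemma key_sum (d : ℕ) (hd : 2 ≤ d) : ∃ K : ℝ, 0 < K ∧ ∀ ε : ℝ, 0 < ε → ε < 1 → ∀ q : ZLat d,
    ∑' l : ZLat d, ENNReal.ofReal (lam d ε ^ 2 * (Jind d ε l (q - l) / (nsq l + nsq (q - l))))
      ≤ ENNReal.ofReal K := by
  have hlog2 : 0 < Real.log 2 := Real.log_pos (by norm_num)
  have hdpos : (0:ℝ) < d := by exact_mod_cast (by omega : 0 < d)
  refine ⟨2 * d * 3 ^ (d - 1) * (1 + 1 / Real.log 2), by positivity, fun ε hε hε1 q => ?_⟩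
  set R : ℕ := ⌊1 / ε⌋₊ with hR
  have hRle : (R : ℝ) ≤ 1 / ε := Nat.floor_le (by positivity)
  have hR1 : 1 ≤ R := by
    rw [hR, Nat.one_le_floor_iff, le_div_iff₀ hε]; linarith
  by_cases hJ : ∀ l, Jind d ε l (q - l) = 0
  · simp [hJ]
  push Not at hJ
  have hlam : lam d ε ^ 2 * ∑ k ∈ Finset.range R, ((k : ℝ) + 1) ^ (d - 1) * (((k : ℝ) + 1) ^ 2)⁻¹
      ≤ 1 + 1 / Real.log 2 := by
    by_cases h2 : d = 2
    · subst h2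
      obtain ⟨l, hl⟩ := hJ
      have hs := Jind_small hε hl
      simp only [lam, if_true]
      have hL : Real.log 2 ≤ Real.log (1 / ε ^ 2) := by
        apply Real.log_le_log (by norm_num)
        rw [le_div_iff₀ (by positivity)]; exact hs
      rw [inv_pow, Real.sq_sqrt (by linarith)]
      have hsum : ∑ k ∈ Finset.range R, ((k : ℝ) + 1) ^ (2 - 1) * (((k : ℝ) + 1) ^ 2)⁻¹
          ≤ 1 + Real.log (1 / ε ^ 2) := by
        have hh := harmonic_le_one_add_log R
        have e : ((harmonic R : ℚ) : ℝ) = ∑ k ∈ Finset.range R, ((k : ℝ) + 1) ^ (2 - 1) * (((k : ℝ) + 1) ^ 2)⁻¹ := by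
          unfold harmonic
          push_cast
          refine Finset.sum_congr rfl fun k _ => ?_
          field_simp
        rw [← e]
        refine hh.trans ?_
        gcongr
        refine hRle.trans ?_
        apply one_div_le_one_div_of_le (by positivity)
        nlinarith
      rw [inv_mul_le_iff₀ (by linarith)]
      refine hsum.trans ?_
      have : 1 ≤ Real.log (1 / ε ^ 2) * (1 / Real.log 2) := by
        rw [mul_one_div, le_div_iff₀ hlog2]; linarith
      linarith
    · have h3 : 3 ≤ d := by omega
      obtain ⟨m, rfl⟩ := Nat.exists_eq_add_of_le h3
      have hl2 : lam (3 + m) ε ^ 2 = ε ^ (m + 1) := by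
        unfold lam
        rw [if_neg h2, ← Real.rpow_natCast, ← Real.rpow_mul hε.le, ← Real.rpow_natCast]
        congr 1
        push_cast; ring
      have hsum : ∑ k ∈ Finset.range R, ((k : ℝ) + 1) ^ (3 + m - 1) * (((k : ℝ) + 1) ^ 2)⁻¹
          ≤ ∑ k ∈ Finset.range R, (1 / ε) ^ m := by
        refine Finset.sum_le_sum fun k hk => ?_
        have : ((k : ℝ) + 1) ^ (3 + m - 1) * (((k : ℝ) + 1) ^ 2)⁻¹ = ((k : ℝ) + 1) ^ m := by
          rw [show 3 + m - 1 = m + 2 by omega, pow_add]; field_simp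
        rw [this]
        gcongr
        refine le_trans ?_ hRle
        have := Finset.mem_range.mp hk
        exact_mod_cast this
      rw [hl2]
      calc _ ≤ ε ^ (m + 1) * ∑ k ∈ Finset.range R, (1 / ε) ^ m := by gcongr
        _ = ε ^ (m + 1) * (R * (1 / ε) ^ m) := by simp
        _ ≤ ε ^ (m + 1) * (1 / ε * (1 / ε) ^ m) := by gcongr
        _ = 1 := by rw [← pow_succ', ← mul_pow]; field_simp; simp
        _ ≤ _ := by have : 0 < 1 / Real.log 2 := by positivity
                    linarith
  have hnn : ∀ l : ZLat d, 0 ≤ lam d ε ^ 2 * (Jind d ε l (q - l) / (nsq l + nsq (q - l))) := fun l => 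
    mul_nonneg (sq_nonneg _) (div_nonneg (Jind_nonneg _ _ _ _) (add_nonneg (nsq_nonneg _) (nsq_nonneg _)))
  rw [tsum_eq_sum (s := Fintype.piFinset (fun _ : Fin d => Finset.Icc (-R : ℤ) R)),
    ← ENNReal.ofReal_sum_of_nonneg (fun l _ => hnn l)]
  · apply ENNReal.ofReal_le_ofReal
    rw [← Finset.mul_sum]
    calc _ ≤ lam d ε ^ 2 * ∑ p ∈ Fintype.piFinset (fun _ : Fin d => Finset.Icc (-R : ℤ) R), (nsq p)⁻¹ := by
          gcongr with l hl
          by_cases hj : Jind d ε l (q - l) = 0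
          · rw [hj, zero_div]; exact inv_nonneg.mpr (nsq_nonneg l)
          have := one_le_nsq l (cut_pos_ne l (Jind_ne hj).1)
          calc _ ≤ 1 / (nsq l + nsq (q - l)) := by
                gcongr
                · exact add_nonneg (nsq_nonneg _) (nsq_nonneg _)
                · exact Jind_le_one _ _ _ _
            _ ≤ 1 / nsq l := by
                apply one_div_le_one_div_of_le (by linarith)
                linarith [nsq_nonneg (q - l)]
            _ = _ := one_div _
      _ ≤ lam d ε ^ 2 * (2 * d * 3 ^ (d - 1) * ∑ k ∈ Finset.range R, ((k : ℝ) + 1) ^ (d - 1) * (((k : ℝ) + 1) ^ 2)⁻¹) := by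
          gcongr
          exact lat_sum d (by omega) R
      _ = 2 * d * 3 ^ (d - 1) * (lam d ε ^ 2 * ∑ k ∈ Finset.range R, ((k : ℝ) + 1) ^ (d - 1) * (((k : ℝ) + 1) ^ 2)⁻¹) := by ring
      _ ≤ _ := by gcongr
  · intro l hl
    suffices h : Jind d ε l (q - l) = 0 by simp [h]
    by_contra hj
    apply hl
    rw [Fintype.mem_piFinset]
    intro i
    have h1 := (Jind_ne hj).2.1
    have h2 := coord_le_cut l i
    have h3 : |(l i : ℝ)| ≤ 1 / ε := by
      rw [le_div_iff₀ hε]; nlinarith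
    have h4 : (l i).natAbs ≤ R := by
      apply Nat.le_floor
      rw [Nat.cast_natAbs]; push_cast; exact h3
    rw [Finset.mem_Icc]; omega

lemma Jind_sq (d : ℕ) (ε : ℝ) (l m : ZLat d) : Jind d ε l m ^ 2 = Jind d ε l m := by
  unfold Jind; split_ifs <;> norm_num

lemma dotw_sq_le {d : ℕ} (w : Fin d → ℝ) (k : ZLat d) :
    dotw w k ^ 2 ≤ (∑ i, w i ^ 2) * nsq k :=
  Finset.sum_mul_sq_le_sq_mul_sq _ _ _

lemma wSq_nonneg {d n : ℕ} (k : Fin n → ZLat d) : 0 ≤ wSq k :=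
  Finset.sum_nonneg fun _ _ => nsq_nonneg _

lemma sobTerm_nonneg {d n : ℕ} (s : ℝ) (f : Chaos d n) (k : Fin n → ZLat d) :
    0 ≤ sobTerm s f k :=
  mul_nonneg (Real.rpow_nonneg (div_nonneg (wSq_nonneg k) (by norm_num)) _) (sq_nonneg _)

/-- two-particle term -/
def tTerm (d : ℕ) (W : ℝ) (ε : ℝ) {n : ℕ} (f : Chaos d (n+1)) (l : ZLat d)
    (p : Fin (n+1) → ZLat d) : ℝ :=
  (W * (nsq (p 0) * ‖f p‖ ^ 2)) *
    (lam d ε ^ 2 * (Jind d ε l (p 0 - l) / (nsq l + nsq (p 0 - l))))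

lemma tTerm_nonneg (d : ℕ) (W : ℝ) (hW : 0 ≤ W) (ε : ℝ) {n : ℕ} (f : Chaos d (n+1)) (l : ZLat d)
    (p : Fin (n+1) → ZLat d) : 0 ≤ tTerm d W ε f l p := by
  have := Jind_nonneg d ε l (p 0 - l)
  have := nsq_nonneg l
  have := nsq_nonneg (p 0 - l)
  have := nsq_nonneg (p 0)
  unfold tTerm
  positivity

lemma tsum_tTerm (d : ℕ) (W : ℝ) (hW : 0 ≤ W) (ε K : ℝ)
    (hK : ∀ q : ZLat d,
      ∑' l : ZLat d, ENNReal.ofReal (lam d ε ^ 2 * (Jind d ε l (q - l) / (nsq l + nsq (q - l))))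
      ≤ ENNReal.ofReal K) {n : ℕ} (f : Chaos d (n+1)) (i j : Fin (n+2)) (h : i < j) :
    ∑' k : Fin (n+2) → ZLat d,
      ENNReal.ofReal (tTerm d W ε f (k i) (Fin.cons (k i + k j) (remove2 k i j h))) ≤
    ∑' p : Fin (n+1) → ZLat d, ENNReal.ofReal (W * (nsq (p 0) * ‖f p‖ ^ 2)) * ENNReal.ofReal K := by
  have hinj : Function.Injective (fun k : Fin (n+2) → ZLat d =>
      ((Fin.cons (k i + k j) (remove2 k i j h) : Fin (n+1) → ZLat d), k i)) := by
    intro k k' hk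
    simp only [Prod.mk.injEq] at hk
    obtain ⟨h1, h2⟩ := hk
    rw [Fin.cons_inj] at h1
    obtain ⟨h1, h3⟩ := h1
    rw [h2] at h1
    have h4 := add_left_cancel h1
    funext x
    rcases Fin.eq_self_or_eq_succAbove j x with rfl | ⟨y, rfl⟩
    · exact h4
    · have hlt : (i : ℕ) < n + 1 :=
        Nat.lt_of_lt_of_le (Fin.lt_def.mp h) (Nat.lt_succ_iff.mp j.isLt)
      rcases Fin.eq_self_or_eq_succAbove (Fin.castLT i hlt) y with rfl | ⟨a, rfl⟩
      · have : j.succAbove (Fin.castLT i hlt) = i := by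
          rw [Fin.succAbove_of_castSucc_lt]
          · simp
          · simpa using h
        rw [this, h2]
      · exact congrFun h3 a
  calc _ ≤ ∑' x : (Fin (n+1) → ZLat d) × ZLat d, ENNReal.ofReal (tTerm d W ε f x.2 x.1) :=
        ENNReal.tsum_comp_le_tsum_of_injective hinj
          (fun x : (Fin (n+1) → ZLat d) × ZLat d => ENNReal.ofReal (tTerm d W ε f x.2 x.1))
    _ = ∑' p : Fin (n+1) → ZLat d, ∑' l : ZLat d, ENNReal.ofReal (tTerm d W ε f l p) :=
        ENNReal.tsum_prod (f := fun p l => ENNReal.ofReal (tTerm d W ε f l p))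
    _ ≤ _ := by
        refine ENNReal.tsum_le_tsum fun p => ?_
        have : 0 ≤ W * (nsq (p 0) * ‖f p‖ ^ 2) := by
          have := nsq_nonneg (p 0)
          positivity
        simp only [tTerm, ENNReal.ofReal_mul this]
        rw [ENNReal.tsum_mul_left]
        gcongr
        exact hK (p 0)

lemma pointwise (d : ℕ) (w : Fin d → ℝ) (ε : ℝ) {n : ℕ} (f : Chaos d (n+1))
    (k : Fin (n+2) → ZLat d) :
    sobTerm (-(1/2) : ℝ) (Aplus d w ε f) k ≤
      (‖(2 * Complex.I / (((2*Real.pi) ^ ((d:ℝ)/2) : ℝ) : ℂ))‖ ^ 2 * (4 / ((n:ℝ) + 2))) *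
        ∑ i : Fin (n+2), ∑ j : Fin (n+2), if h : i < j then
          tTerm d (∑ i, w i ^ 2) ε f (k i) (Fin.cons (k i + k j) (remove2 k i j h)) else 0 := by
  set c := ‖(2 * Complex.I / (((2*Real.pi) ^ ((d:ℝ)/2) : ℝ) : ℂ))‖ with hc
  have hN : (0:ℝ) < (n:ℝ) + 2 := by positivity
  set F : Fin (n+2) → Fin (n+2) → ℂ := fun i j => if h : i < j then
        ((dotw w (k i + k j) : ℝ) : ℂ) * ((Jind d ε (k i) (k j) : ℝ) : ℂ) *
          f (Fin.cons (k i + k j) (remove2 k i j h))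
      else 0 with hF
  set T : Fin (n+2) → Fin (n+2) → ℝ := fun i j => if h : i < j then
          tTerm d (∑ i, w i ^ 2) ε f (k i) (Fin.cons (k i + k j) (remove2 k i j h)) else 0 with hT
  have hW : 0 ≤ ∑ i, w i ^ 2 := Finset.sum_nonneg fun _ _ => sq_nonneg _
  have hTnn : ∀ i j, 0 ≤ T i j := by
    intro i j
    simp only [hT]
    split_ifs
    · exact tTerm_nonneg _ _ hW _ _ _ _
    · exact le_rfl
  have hA : ‖Aplus d w ε f k‖ = c * (|lam d ε| / ((n:ℝ)+2)) * ‖∑ i, ∑ j, F i j‖ := by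
    simp only [Aplus, norm_mul, norm_neg, Complex.norm_real, hF, hc, norm_div, Real.norm_eq_abs]
    rw [abs_of_pos hN]
  have hFT : ∀ i j, (|lam d ε| * ‖F i j‖) ^ 2 ≤ (nsq (k i) + nsq (k j)) * T i j := by
    intro i j
    simp only [hF, hT]
    split_ifs with h
    · simp only [tTerm, Fin.cons_zero, add_sub_cancel_left, norm_mul, Complex.norm_real,
        Real.norm_eq_abs, mul_pow, sq_abs, Jind_sq]
      by_cases hj : Jind d ε (k i) (k j) = 0
      · simp [hj]
      have h1 := one_le_nsq (k i) (cut_pos_ne _ (Jind_ne hj).1)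
      have h2 := nsq_nonneg (k j)
      have h3 := dotw_sq_le w (k i + k j)
      have h4 := Jind_nonneg d ε (k i) (k j)
      set ff := ‖f (Fin.cons (k i + k j) (remove2 k i j h))‖
      have h5 : nsq (k i) + nsq (k j) ≠ 0 := by linarith
      calc _ ≤ lam d ε ^ 2 * ((∑ i, w i ^ 2) * nsq (k i + k j) * Jind d ε (k i) (k j) * ff ^ 2) := by
            gcongr
        _ = _ := by field_simp
    · simp
  have hCS : (∑ i, ∑ j, |lam d ε| * ‖F i j‖) ^ 2 ≤ 
      (∑ i, ∑ j, (nsq (k i) + nsq (k j))) * ∑ i, ∑ j, T i j := by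
    have := Finset.sum_sq_le_sum_mul_sum_of_sq_le_mul (Finset.univ : Finset (Fin (n+2) × Fin (n+2)))
      (r := fun x => |lam d ε| * ‖F x.1 x.2‖) (f := fun x => nsq (k x.1) + nsq (k x.2))
      (g := fun x => T x.1 x.2) (fun _ _ => add_nonneg (nsq_nonneg _) (nsq_nonneg _))
      (fun _ _ => hTnn _ _) (fun _ _ => hFT _ _)
    simpa only [Fintype.sum_prod_type] using this
  have ha : (∑ i, ∑ j, (nsq (k i) + nsq (k j))) = 2 * ((n:ℝ) + 2) * wSq k := by
    simp only [Finset.sum_add_distrib, Finset.sum_const, Finset.card_univ, Fintype.card_fin,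
      nsmul_eq_mul, ← Finset.mul_sum]
    push_cast
    simp only [wSq]; ring
  have hle : |lam d ε| * ‖∑ i, ∑ j, F i j‖ ≤ ∑ i, ∑ j, |lam d ε| * ‖F i j‖ := by
    simp only [← Finset.mul_sum]
    gcongr
    exact (norm_sum_le _ _).trans (Finset.sum_le_sum fun i _ => norm_sum_le _ _)
  have hTs : 0 ≤ ∑ i, ∑ j, T i j := Finset.sum_nonneg fun i _ => Finset.sum_nonneg fun j _ => hTnn i j
  have hfin : (|lam d ε| * ‖∑ i, ∑ j, F i j‖) ^ 2 ≤ 2 * ((n:ℝ) + 2) * wSq k * ∑ i, ∑ j, T i j := by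
    rw [← ha]
    refine le_trans ?_ hCS
    gcongr
  have hw0 := wSq_nonneg k
  have hpow : (wSq k / 2) ^ (2 * (-(1/2) : ℝ)) = (wSq k / 2)⁻¹ := by
    rw [show (2 * (-(1/2) : ℝ)) = -1 by norm_num, Real.rpow_neg_one]
  unfold sobTerm
  rw [hpow, hA]
  calc (wSq k / 2)⁻¹ * (c * (|lam d ε| / ((n:ℝ)+2)) * ‖∑ i, ∑ j, F i j‖) ^ 2
      = (wSq k / 2)⁻¹ * (c ^ 2 / ((n:ℝ)+2) ^ 2) * (|lam d ε| * ‖∑ i, ∑ j, F i j‖) ^ 2 := by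
        field_simp
    _ ≤ (wSq k / 2)⁻¹ * (c ^ 2 / ((n:ℝ)+2) ^ 2) * (2 * ((n:ℝ) + 2) * wSq k * ∑ i, ∑ j, T i j) := by
        gcongr
    _ = ((wSq k / 2)⁻¹ * (wSq k / 2)) * ((c ^ 2 * (4 / ((n:ℝ) + 2))) * ∑ i, ∑ j, T i j) := by
        field_simp; ring
    _ ≤ 1 * ((c ^ 2 * (4 / ((n:ℝ) + 2))) * ∑ i, ∑ j, T i j) := by
        gcongr
        exact inv_mul_le_one
    _ = _ := one_mul _

lemma symm_sum {d n : ℕ} (f : Chaos d (n+1)) (hf : Symm f) :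
    ((n : ENNReal) + 1) * ∑' p : Fin (n+1) → ZLat d, ENNReal.ofReal (nsq (p 0) * ‖f p‖ ^ 2)
      = ∑' p, ENNReal.ofReal (2 * sobTerm (1/2 : ℝ) f p) := by
  have h1 : ∀ a : Fin (n+1), ∑' p : Fin (n+1) → ZLat d, ENNReal.ofReal (nsq (p a) * ‖f p‖ ^ 2)
      = ∑' p : Fin (n+1) → ZLat d, ENNReal.ofReal (nsq (p 0) * ‖f p‖ ^ 2) := by
    intro a
    rw [← Equiv.tsum_eq (Equiv.arrowCongr (Equiv.swap 0 a) (Equiv.refl (ZLat d)))]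
    refine tsum_congr fun p => ?_
    have e : (Equiv.arrowCongr (Equiv.swap 0 a) (Equiv.refl (ZLat d))) p = p ∘ (Equiv.swap 0 a) := by
      ext x; simp [Equiv.arrowCongr]
    rw [e, hf]
    simp
  have h2 : ∀ p : Fin (n+1) → ZLat d, ENNReal.ofReal (2 * sobTerm (1/2 : ℝ) f p) =
      ∑ a, ENNReal.ofReal (nsq (p a) * ‖f p‖ ^ 2) := by
    intro p
    rw [← ENNReal.ofReal_sum_of_nonneg (fun a _ => mul_nonneg (nsq_nonneg _) (sq_nonneg _))]
    congr 1
    rw [← Finset.sum_mul]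
    unfold sobTerm wSq
    norm_num
    ring
  simp only [h2]
  rw [Summable.tsum_finsetSum (fun _ _ => ENNReal.summable)]
  simp only [h1]
  simp

/-- graded sector bound, `+` case.
For `d ≥ 2` and `w ∈ ℝ^d \ {0}` there is a constant `C > 0` (independent of `ε`, `n`
and `ψ`) such that for every `ε ∈ (0,1)`, every `n ≥ 1` (here the chaos level is `n+1 ≥ 1`)
and every symmetric `ψ ∈ ΓL²_{n+1}` supported on `(ℤ^d_0)^{n+1}` with
`‖(−L₀)^{1/2}ψ‖ < ∞`, one has `‖(−L₀)^{−1/2} A⁺_ε ψ‖ ≤ C √(n+1) ‖(−L₀)^{1/2} ψ‖`. -/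
theorem stmt0 (d : ℕ) (hd : 2 ≤ d) (w : Fin d → ℝ) (hw : w ≠ 0) :
    ∃ C : ℝ, 0 < C ∧
      ∀ ε : ℝ, 0 < ε → ε < 1 →
      ∀ (n : ℕ) (ψ : Chaos d (n+1)),
        Symm ψ → SuppOk ψ → Summable (sobTerm (1/2 : ℝ) ψ) →
        Summable (sobTerm (-(1/2) : ℝ) (Aplus d w ε ψ)) ∧
        Real.sqrt (sobSq (-(1/2) : ℝ) (Aplus d w ε ψ)) ≤
          C * Real.sqrt ((n : ℝ) + 1) * Real.sqrt (sobSq (1/2 : ℝ) ψ) := by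
  obtain ⟨K, hKpos, hK⟩ := key_sum d hd
  set c := ‖(2 * Complex.I / (((2*Real.pi) ^ ((d:ℝ)/2) : ℝ) : ℂ))‖ with hc
  set W := ∑ i, w i ^ 2 with hWdef
  have hW : 0 ≤ W := Finset.sum_nonneg fun _ _ => sq_nonneg _
  refine ⟨Real.sqrt (32 * c ^ 2 * K * W + 1), Real.sqrt_pos.mpr (by positivity), ?_⟩
  intro ε hε hε1 n ψ hsym _ hsum
  have hn : (0:ℝ) < (n:ℝ) + 1 := by positivity
  set T := ∑' p, sobTerm (1/2 : ℝ) ψ p with hTdef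
  have hT : 0 ≤ T := tsum_nonneg fun p => sobTerm_nonneg _ _ _
  set Sg := ∑' p : Fin (n+1) → ZLat d, ENNReal.ofReal (nsq (p 0) * ‖ψ p‖ ^ 2) with hSg
  have hSgle : Sg ≤ ENNReal.ofReal (2 * T / (n + 1)) := by
    have h := symm_sum ψ hsym
    rw [← ENNReal.ofReal_tsum_of_nonneg
      (fun p => mul_nonneg (by norm_num) (sobTerm_nonneg _ _ _)) (hsum.mul_left 2),
      tsum_mul_left] at h
    have hcast : ((n : ENNReal) + 1) = ENNReal.ofReal ((n:ℝ) + 1) := by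
      rw [ENNReal.ofReal_add (by positivity) (by norm_num)]; simp
    rw [ENNReal.ofReal_div_of_pos hn, ← hcast, ENNReal.le_div_iff_mul_le (by simp) (by simp),
      mul_comm]
    exact h.le
  have hterm : ∀ i j : Fin (n+2), ∑' k : Fin (n+2) → ZLat d,
      ENNReal.ofReal (if h : i < j then
          tTerm d W ε ψ (k i) (Fin.cons (k i + k j) (remove2 k i j h)) else 0) ≤
      ENNReal.ofReal (W * (2 * T / (n + 1)) * K) := by
    intro i j
    by_cases h : i < j
    · simp only [h, dif_pos]
      refine (tsum_tTerm d W hW ε K (hK ε hε hε1) ψ i j h).trans ?_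
      rw [ENNReal.tsum_mul_right, ENNReal.ofReal_mul (by positivity), ENNReal.ofReal_mul hW]
      simp only [ENNReal.ofReal_mul hW]
      rw [ENNReal.tsum_mul_left]
      gcongr
    · simp [h]
  set B : ℝ := (c ^ 2 * (4 / ((n:ℝ) + 2))) * (((n:ℝ) + 2) * (((n:ℝ) + 2) *
    (W * (2 * T / (n + 1)) * K))) with hB
  have hB0 : 0 ≤ B := by positivity
  have hcast2 : ((n : ENNReal) + 2) = ENNReal.ofReal ((n:ℝ) + 2) := by
    rw [ENNReal.ofReal_add (by positivity) (by norm_num)]; simp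
  have htot : ∑' k, ENNReal.ofReal (sobTerm (-(1/2) : ℝ) (Aplus d w ε ψ) k) ≤ ENNReal.ofReal B := by
    have hnn : ∀ (k : Fin (n+2) → ZLat d) (i j : Fin (n+2)), 0 ≤ (if h : i < j then
          tTerm d W ε ψ (k i) (Fin.cons (k i + k j) (remove2 k i j h)) else 0) := by
      intro k i j
      split_ifs
      · exact tTerm_nonneg _ _ hW _ _ _ _
      · exact le_rfl
    calc _ ≤ ∑' k : Fin (n+2) → ZLat d, ENNReal.ofReal (c ^ 2 * (4 / ((n:ℝ) + 2))) *
          ∑ i : Fin (n+2), ∑ j : Fin (n+2), ENNReal.ofReal (if h : i < j then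
          tTerm d W ε ψ (k i) (Fin.cons (k i + k j) (remove2 k i j h)) else 0) := by
          refine ENNReal.tsum_le_tsum fun k => ?_
          refine (ENNReal.ofReal_le_ofReal (pointwise d w ε ψ k)).trans ?_
          rw [ENNReal.ofReal_mul (by positivity), ENNReal.ofReal_sum_of_nonneg
            (fun i _ => Finset.sum_nonneg fun j _ => hnn k i j)]
          gcongr with i
          rw [ENNReal.ofReal_sum_of_nonneg (fun j _ => hnn k i j)]
      _ = ENNReal.ofReal (c ^ 2 * (4 / ((n:ℝ) + 2))) *
          ∑ i : Fin (n+2), ∑ j : Fin (n+2), ∑' k : Fin (n+2) → ZLat d,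
            ENNReal.ofReal (if h : i < j then
          tTerm d W ε ψ (k i) (Fin.cons (k i + k j) (remove2 k i j h)) else 0) := by
          rw [ENNReal.tsum_mul_left, Summable.tsum_finsetSum (fun _ _ => ENNReal.summable)]
          congr 1
          refine Finset.sum_congr rfl fun i _ => ?_
          rw [Summable.tsum_finsetSum (fun _ _ => ENNReal.summable)]
      _ ≤ ENNReal.ofReal (c ^ 2 * (4 / ((n:ℝ) + 2))) *
          ∑ i : Fin (n+2), ∑ j : Fin (n+2), ENNReal.ofReal (W * (2 * T / (n + 1)) * K) := by
          gcongr with i _ j _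
          exact hterm i j
      _ = ENNReal.ofReal B := by
          simp only [Finset.sum_const, Finset.card_univ, Fintype.card_fin, nsmul_eq_mul]
          push_cast
          rw [hB, hcast2, ← ENNReal.ofReal_mul (by positivity), ← ENNReal.ofReal_mul (by positivity),
            ← ENNReal.ofReal_mul (by positivity)]
  have hS : Summable (sobTerm (-(1/2) : ℝ) (Aplus d w ε ψ)) := by
    have h := ENNReal.summable_toReal (ne_top_of_le_ne_top ENNReal.ofReal_ne_top htot)
    simpa only [ENNReal.toReal_ofReal (sobTerm_nonneg _ _ _)] using h
  refine ⟨hS, ?_⟩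
  rw [← ENNReal.ofReal_tsum_of_nonneg (fun k => sobTerm_nonneg _ _ _) hS,
    ENNReal.ofReal_le_ofReal_iff hB0] at htot
  rw [← Real.sqrt_mul (by positivity), ← Real.sqrt_mul (by positivity)]
  apply Real.sqrt_le_sqrt
  unfold sobSq
  rw [← hTdef]
  calc _ ≤ ((n+2).factorial : ℝ) * B := by gcongr
    _ = ((n+1).factorial : ℝ) * T * (8 * c ^ 2 * K * W) * (((n:ℝ) + 2) ^ 2 / (n + 1)) := by
        rw [Nat.factorial_succ (n+1), hB]
        push_cast
        field_simp
        ring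
    _ ≤ ((n+1).factorial : ℝ) * T * (8 * c ^ 2 * K * W) * (4 * ((n:ℝ) + 1)) := by
        gcongr
        rw [div_le_iff₀ hn]
        nlinarith [(Nat.cast_nonneg n : (0:ℝ) ≤ n)]
    _ ≤ _ := by
        have : 0 ≤ ((n:ℝ) + 1) * (((n+1).factorial : ℝ) * T) := by positivity
        nlinarith

end SBE
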